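/- Let (Ω,Σ,μ) be a probability space and φ : Ω → Ω a bimeasurable measure-preserving transformation with Perron–Frobenius operator P on L¹(Ω,Σ,μ). If the sequence (Pⁿf) converges in L¹-norm for every f ∈ L¹(Ω,Σ,μ), then for every A ∈ Σ the sequence of images (φⁿ(A)) converges in the measure algebra to U := ⋃_{n≥0} φⁿ(A); that is, μ(φⁿ(A) Δ U) → 0 as n → ∞. (The set U coincides up to a μ-null set with the minimal invariant superset A* of A.) -/

import Mathlib

open MeasureTheory Filter Set Topology
open scoped symmDiff ENNReal

/-!
Let `g` be the `L¹`-limit of `Pⁿ 1_B`. It is a nonnegative fixed point of `P`, so its zero set is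
`φ`-invariant up to a null set; comparing the integrals of `1_B` and `g` over that zero set shows
that `g > 0` a.e. on `B`. Since `φ⁻ⁿ(B \ φⁿ(B))` misses `B`, the integral of `Pⁿ 1_B` over
`B \ φⁿ(B)` vanishes. Norm convergence is uniform over all sets of integration, so the integral of
`g` over `B \ φⁿ(B)` tends to `0`, and positivity of `g` on `B` gives `μ (B \ φⁿ(B)) → 0`.
Applying this to `B = φᵏ(A)` for every `k` yields `μ (U \ φⁿ(A)) → 0`, where `U = ⋃ₖ φᵏ(A)`.

As `U ⊆ φ⁻¹(U)` and both sets have the same measure, `U` agrees a.e. with every `φ⁻ⁿ(U)`, hence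
with their union, which is `A*`.
-/

section Iterates

variable {Ω : Type*} {φ : Ω → Ω}

/-- The minimal invariant superset `A*` of `A`. The sets in the intersection are not required to be
measurable. -/
def minimalInvariantSuperset (φ : Ω → Ω) (A : Set Ω) : Set Ω :=
  ⋂₀ {B | A ⊆ B ∧ φ ⁻¹' B = B}

theorem iUnion_image_iterate_subset_preimage (φ : Ω → Ω) (A : Set Ω) :
    ⋃ k, φ^[k] '' A ⊆ φ ⁻¹' ⋃ k, φ^[k] '' A := by
  refine iUnion_subset fun k ↦ image_subset_iff.2 fun x hx ↦ mem_iUnion.2 ⟨k + 1, x, hx, ?_⟩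
  rw [Function.iterate_succ_apply']

theorem preimage_iUnion_preimage_iterate_eq {s : Set Ω} (hs : s ⊆ φ ⁻¹' s) :
    φ ⁻¹' ⋃ n, φ^[n] ⁻¹' s = ⋃ n, φ^[n] ⁻¹' s := by
  rw [preimage_iUnion]
  refine Subset.antisymm (iUnion_subset fun n ↦ ?_) (iUnion_mono fun n ↦ ?_)
  · rw [← preimage_comp, ← Function.iterate_succ]
    exact subset_iUnion (fun n ↦ φ^[n] ⁻¹' s) (n + 1)
  · rw [← preimage_comp, ← Function.iterate_succ, Function.iterate_succ', preimage_comp]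
    exact preimage_mono hs

theorem minimalInvariantSuperset_eq_iUnion_preimage_iterate (φ : Ω → Ω) (A : Set Ω) :
    minimalInvariantSuperset φ A = ⋃ n, φ^[n] ⁻¹' ⋃ k, φ^[k] '' A := by
  refine Subset.antisymm (sInter_subset_of_mem ⟨fun x hx ↦ ?_, ?_⟩) (subset_sInter ?_)
  · exact mem_iUnion.2 ⟨0, mem_iUnion.2 ⟨0, x, hx, rfl⟩⟩
  · exact preimage_iUnion_preimage_iterate_eq (iUnion_image_iterate_subset_preimage φ A)
  · rintro B ⟨hAB, hB⟩
    have hBn (n : ℕ) : φ^[n] ⁻¹' B = B := by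
      rw [preimage_iterate_eq, Function.iterate_fixed hB]
    refine iUnion_subset fun n ↦ (preimage_mono (iUnion_subset fun k ↦ ?_)).trans (hBn n).subset
    exact image_subset_iff.2 (hAB.trans (hBn k).superset)

theorem apply_eq_of_tendsto_pow_apply {R M : Type*} [Semiring R] [AddCommMonoid M] [Module R M]
    [TopologicalSpace M] [T2Space M] {T : M →L[R] M} {x y : M}
    (h : Tendsto (fun n ↦ (T ^ n) x) atTop (𝓝 y)) : T y = y := by
  have hsucc : Tendsto (fun n ↦ (T ^ (n + 1)) x) atTop (𝓝 (T y)) := by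
    simpa only [pow_succ', mul_apply_eq_comp, Function.comp_def] using
      (T.continuous.tendsto y).comp h
  exact tendsto_nhds_unique hsucc ((tendsto_add_atTop_iff_nat 1).2 h)

end Iterates

section Measures

variable {Ω : Type*} [MeasurableSpace Ω] {μ : Measure Ω}

theorem setIntegral_eq_zero_iff_ae_mem_imp {f : Ω → ℝ} {s : Set Ω} (hf : Integrable f μ)
    (hf0 : 0 ≤ᵐ[μ] f) (hs : NullMeasurableSet s μ) :
    ∫ x in s, f x ∂μ = 0 ↔ ∀ᵐ x ∂μ, x ∈ s → f x = 0 :=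
  (setIntegral_eq_zero_iff_of_nonneg_ae (ae_restrict_of_ae hf0) hf.integrableOn).trans
    (ae_restrict_iff'₀ hs)

theorem norm_setIntegral_le_norm_L1 {E : Type*} [NormedAddCommGroup E] [NormedSpace ℝ E]
    (f : Lp E 1 μ) (s : Set Ω) : ‖∫ x in s, f x ∂μ‖ ≤ ‖f‖ :=
  calc
    ‖∫ x in s, f x ∂μ‖ ≤ ∫ x in s, ‖f x‖ ∂μ := norm_integral_le_integral_norm _
    _ ≤ ∫ x, ‖f x‖ ∂μ :=
      setIntegral_le_integral (L1.integrable_coeFn f).norm (ae_of_all _ fun _ ↦ norm_nonneg _)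
    _ = ‖f‖ := (L1.norm_eq_integral_norm f).symm

theorem setIntegral_L1_sub {E : Type*} [NormedAddCommGroup E] [NormedSpace ℝ E]
    (f g : Lp E 1 μ) (s : Set Ω) :
    ∫ x in s, (f - g) x ∂μ = ∫ x in s, f x ∂μ - ∫ x in s, g x ∂μ := by
  rw [← integral_sub (L1.integrable_coeFn f).integrableOn (L1.integrable_coeFn g).integrableOn]
  exact integral_congr_ae (ae_restrict_of_ae (Lp.coeFn_sub f g))

theorem tendsto_setIntegral_zero_of_tendsto_L1 {ι E : Type*} [NormedAddCommGroup E]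
    [NormedSpace ℝ E] {l : Filter ι} {F : ι → Lp E 1 μ} {g : Lp E 1 μ} {s : ι → Set Ω}
    (hF : Tendsto F l (𝓝 g)) (hs : Tendsto (fun i ↦ ∫ x in s i, F i x ∂μ) l (𝓝 0)) :
    Tendsto (fun i ↦ ∫ x in s i, g x ∂μ) l (𝓝 0) := by
  have hdiff : Tendsto (fun i ↦ ∫ x in s i, (F i - g) x ∂μ) l (𝓝 0) :=
    squeeze_zero_norm (fun i ↦ norm_setIntegral_le_norm_L1 _ _)
      (tendsto_iff_norm_sub_tendsto_zero.1 hF)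
  simpa only [setIntegral_L1_sub, sub_sub_cancel, sub_zero] using hs.sub hdiff

theorem tendsto_measure_zero_of_absolutelyContinuous {ι : Type*} {ν : Measure Ω}
    [IsFiniteMeasure μ] [SigmaFinite ν] (hμν : μ ≪ ν) {l : Filter ι} {s : ι → Set Ω}
    (hs : Tendsto (fun i ↦ ν (s i)) l (𝓝 0)) : Tendsto (fun i ↦ μ (s i)) l (𝓝 0) := by
  simpa only [Measure.setLIntegral_rnDeriv hμν] using
    tendsto_setLIntegral_zero (Measure.lintegral_rnDeriv_lt_top μ ν).ne hs

theorem tendsto_measure_inter_zero_of_setIntegral [IsFiniteMeasure μ] {ι : Type*} {l : Filter ι}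
    {g : Ω → ℝ} {s : ι → Set Ω} {t : Set Ω} (hg : Integrable g μ) (hg0 : 0 ≤ᵐ[μ] g)
    (ht : NullMeasurableSet t μ) (hgt : ∀ᵐ x ∂μ, x ∈ t → g x ≠ 0)
    (hs : Tendsto (fun i ↦ ∫ x in s i, g x ∂μ) l (𝓝 0)) :
    Tendsto (fun i ↦ μ (s i ∩ t)) l (𝓝 0) := by
  set G : Ω → ℝ≥0∞ := fun x ↦ ENNReal.ofReal (g x)
  have hG : AEMeasurable G μ := hg.aemeasurable.ennreal_ofReal
  have hGt : ∀ᵐ x ∂μ.restrict t, G x ≠ 0 := by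
    refine (ae_restrict_iff'₀ ht).2 ?_
    filter_upwards [hg0, hgt] with x hx hxt hxmem
    exact (ENNReal.ofReal_pos.2 (hx.lt_of_ne' (hxt hxmem))).ne'
  have hac : μ.restrict t ≪ μ.withDensity G :=
    (withDensity_absolutelyContinuous' hG.restrict hGt).trans <|
      restrict_withDensity' (μ := μ) t G ▸ Measure.restrict_le_self.absolutelyContinuous
  have hsG : Tendsto (fun i ↦ μ.withDensity G (s i)) l (𝓝 0) := by
    simpa only [ENNReal.ofReal_zero, withDensity_apply',
      ofReal_integral_eq_lintegral_ofReal hg.integrableOn (ae_restrict_of_ae hg0)]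
      using ENNReal.tendsto_ofReal hs
  simpa only [Measure.restrict_apply₀' ht] using
    tendsto_measure_zero_of_absolutelyContinuous hac hsG

theorem tendsto_measure_iUnion_sdiff_zero [IsFiniteMeasure μ] {ι : Type*} {l : Filter ι}
    {s : ℕ → Set Ω} {t : ι → Set Ω} (hs : ∀ k, NullMeasurableSet (s k) μ)
    (hst : ∀ k, Tendsto (fun i ↦ μ (s k \ t i)) l (𝓝 0)) :
    Tendsto (fun i ↦ μ ((⋃ k, s k) \ t i)) l (𝓝 0) := by
  refine ENNReal.tendsto_nhds_zero.2 fun ε hε ↦ ?_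
  have hε2 : 0 < ε / 2 := ENNReal.half_pos hε.ne'
  have hempty : ⋂ k, (⋃ j, s j) \ s k = ∅ := by
    rw [← sdiff_iUnion, sdiff_self]
  obtain ⟨N, hN⟩ : ∃ N, μ (⋂ k ≤ N, (⋃ j, s j) \ s k) < ε / 2 :=
    exists_measure_iInter_lt (fun k ↦ (NullMeasurableSet.iUnion hs).diff (hs k)) hε2
      ⟨0, measure_ne_top _ _⟩ hempty
  have hsum : Tendsto (fun i ↦ ∑ k ∈ Finset.Iic N, μ (s k \ t i)) l (𝓝 0) := by
    simpa only [Finset.sum_const_zero] using tendsto_finsetSum (Finset.Iic N) fun k _ ↦ hst k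
  filter_upwards [ENNReal.tendsto_nhds_zero.1 hsum _ hε2] with i hi
  have hcover : (⋃ k, s k) \ t i ⊆
      (⋂ k ≤ N, (⋃ j, s j) \ s k) ∪ ⋃ k ∈ Finset.Iic N, s k \ t i := by
    rintro x ⟨hxU, hxt⟩
    by_cases hx : ∃ k ≤ N, x ∈ s k
    · obtain ⟨k, hkN, hxk⟩ := hx
      exact Or.inr (mem_biUnion (Finset.mem_Iic.2 hkN) ⟨hxk, hxt⟩)
    · exact Or.inl (mem_iInter₂.2 fun k hkN ↦ ⟨hxU, fun hxk ↦ hx ⟨k, hkN, hxk⟩⟩)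
  calc
    μ ((⋃ k, s k) \ t i)
      ≤ μ (⋂ k ≤ N, (⋃ j, s j) \ s k) + μ (⋃ k ∈ Finset.Iic N, s k \ t i) :=
        (measure_mono hcover).trans (measure_union_le _ _)
    _ ≤ ε / 2 + ε / 2 := add_le_add hN.le ((measure_biUnion_finset_le _ _).trans hi)
    _ = ε := ENNReal.add_halves ε

end Measures

section PerronFrobenius

variable {Ω : Type*} [MeasurableSpace Ω] {μ : Measure Ω} {φ : Ω → Ω}

/-- The defining property of the Perron–Frobenius operator of a measurable transformation `φ`,
which describes how densities with respect to `μ` evolve under `φ`. -/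
def IsPerronFrobenius (μ : Measure Ω) (φ : Ω → Ω) (P : Lp ℝ 1 μ →L[ℝ] Lp ℝ 1 μ) : Prop :=
  ∀ (f : Lp ℝ 1 μ) (s : Set Ω), MeasurableSet s → ∫ x in s, P f x ∂μ = ∫ x in φ ⁻¹' s, f x ∂μ

namespace IsPerronFrobenius

variable {P : Lp ℝ 1 μ →L[ℝ] Lp ℝ 1 μ}

theorem pow (hP : IsPerronFrobenius μ φ P) (hφ : Measurable φ) (n : ℕ) :
    IsPerronFrobenius μ φ^[n] (P ^ n) := by
  induction n with
  | zero => exact fun f s _ ↦ rfl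
  | succ n ih =>
    intro f s hs
    rw [pow_succ', mul_apply_eq_comp, hP _ s hs, ih f _ (hφ hs), ← preimage_comp,
      Function.iterate_succ']

theorem setIntegral_eq₀ (hP : IsPerronFrobenius μ φ P)
    (hφ : Measure.QuasiMeasurePreserving φ μ μ) (f : Lp ℝ 1 μ) {s : Set Ω}
    (hs : NullMeasurableSet s μ) : ∫ x in s, P f x ∂μ = ∫ x in φ ⁻¹' s, f x ∂μ := by
  have hst : s =ᵐ[μ] toMeasurable μ s := hs.toMeasurable_ae_eq.symm
  rw [setIntegral_congr_set hst, hP f _ (measurableSet_toMeasurable μ s),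
    setIntegral_congr_set (hφ.preimage_ae_eq hst)]

theorem apply_nonneg (hP : IsPerronFrobenius μ φ P) {f : Lp ℝ 1 μ} (hf : 0 ≤ f) : 0 ≤ P f := by
  refine (Lp.coeFn_nonneg _).1 (ae_nonneg_of_forall_setIntegral_nonneg
    (L1.integrable_coeFn _) fun s hs _ ↦ ?_)
  rw [hP f s hs]
  exact integral_nonneg_of_ae (ae_restrict_of_ae ((Lp.coeFn_nonneg f).2 hf))

theorem limit_nonneg (hP : IsPerronFrobenius μ φ P) (hφ : Measurable φ) {f g : Lp ℝ 1 μ}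
    (hf : 0 ≤ f) (hg : Tendsto (fun n ↦ (P ^ n) f) atTop (𝓝 g)) : 0 ≤ g :=
  ge_of_tendsto' hg fun n ↦ (hP.pow hφ n).apply_nonneg hf

theorem preimage_zero_set_ae_eq [IsFiniteMeasure μ] (hP : IsPerronFrobenius μ φ P)
    (hφ : MeasurePreserving φ μ μ) {g : Lp ℝ 1 μ} (hg : 0 ≤ g) (hPg : P g = g) :
    φ ⁻¹' {x | g x = 0} =ᵐ[μ] {x | g x = 0} := by
  set Z : Set Ω := {x | g x = 0}
  have hZ : MeasurableSet Z :=
    measurableSet_eq_fun (Lp.stronglyMeasurable g).measurable measurable_const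
  have hint : ∫ x in φ ⁻¹' Z, g x ∂μ = 0 := by
    rw [← hP g Z hZ, hPg]
    exact setIntegral_eq_zero_of_forall_eq_zero fun x hx ↦ hx
  have hsub : φ ⁻¹' Z ≤ᵐ[μ] Z :=
    (setIntegral_eq_zero_iff_ae_mem_imp (L1.integrable_coeFn g) ((Lp.coeFn_nonneg g).2 hg)
      (hφ.measurable hZ).nullMeasurableSet).1 hint
  exact ae_eq_of_ae_subset_of_measure_ge hsub (hφ.measure_preimage hZ.nullMeasurableSet).ge
    (hφ.measurable hZ).nullMeasurableSet (measure_ne_top _ _)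

theorem ae_limit_eq_zero_imp [IsFiniteMeasure μ] (hP : IsPerronFrobenius μ φ P)
    (hφ : MeasurePreserving φ μ μ) {f g : Lp ℝ 1 μ} (hf : 0 ≤ f)
    (hg : Tendsto (fun n ↦ (P ^ n) f) atTop (𝓝 g)) : ∀ᵐ x ∂μ, g x = 0 → f x = 0 := by
  set Z : Set Ω := {x | g x = 0}
  have hZ : MeasurableSet Z :=
    measurableSet_eq_fun (Lp.stronglyMeasurable g).measurable measurable_const
  have hinv : φ ⁻¹' Z =ᵐ[μ] Z :=
    hP.preimage_zero_set_ae_eq hφ (hP.limit_nonneg hφ.measurable hf hg)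
      (apply_eq_of_tendsto_pow_apply hg)
  have hconst (n : ℕ) : ∫ x in Z, (P ^ n) f x ∂μ = ∫ x in Z, f x ∂μ := by
    rw [hP.pow hφ.measurable n f Z hZ,
      setIntegral_congr_set (hφ.quasiMeasurePreserving.preimage_iterate_ae_eq n hinv)]
  have hint : ∫ x in Z, f x ∂μ = 0 :=
    calc
      ∫ x in Z, f x ∂μ = ∫ x in Z, g x ∂μ :=
        tendsto_nhds_unique (tendsto_const_nhds.congr fun n ↦ (hconst n).symm)
          (((continuous_setIntegral Z).tendsto g).comp hg)
      _ = 0 := setIntegral_eq_zero_of_forall_eq_zero fun x hx ↦ hx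
  exact (setIntegral_eq_zero_iff_ae_mem_imp (L1.integrable_coeFn f) ((Lp.coeFn_nonneg f).2 hf)
    hZ.nullMeasurableSet).1 hint

theorem tendsto_measure_inter_support [IsFiniteMeasure μ] (hP : IsPerronFrobenius μ φ P)
    (hφ : MeasurePreserving φ μ μ) {f g : Lp ℝ 1 μ} (hf : 0 ≤ f)
    (hg : Tendsto (fun n ↦ (P ^ n) f) atTop (𝓝 g)) {s : ℕ → Set Ω}
    (hs : ∀ n, NullMeasurableSet (s n) μ)
    (hfs : Tendsto (fun n ↦ ∫ x in φ^[n] ⁻¹' s n, f x ∂μ) atTop (𝓝 0)) :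
    Tendsto (fun n ↦ μ (s n ∩ Function.support f)) atTop (𝓝 0) := by
  have hgs : Tendsto (fun n ↦ ∫ x in s n, g x ∂μ) atTop (𝓝 0) :=
    tendsto_setIntegral_zero_of_tendsto_L1 hg <| hfs.congr fun n ↦
      ((hP.pow hφ.measurable n).setIntegral_eq₀ (hφ.iterate n).quasiMeasurePreserving f
        (hs n)).symm
  refine tendsto_measure_inter_zero_of_setIntegral (L1.integrable_coeFn g)
    ((Lp.coeFn_nonneg g).2 (hP.limit_nonneg hφ.measurable hf hg))
    (measurableSet_support (Lp.stronglyMeasurable f).measurable).nullMeasurableSet ?_ hgs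
  filter_upwards [hP.ae_limit_eq_zero_imp hφ hf hg] with x hx
  exact mt hx

theorem tendsto_measure_sdiff_image_iterate [IsFiniteMeasure μ] (hP : IsPerronFrobenius μ φ P)
    (hφ : MeasurePreserving φ μ μ) {B : Set Ω} {f g : Lp ℝ 1 μ}
    (himage : ∀ n, NullMeasurableSet (φ^[n] '' B) μ) (hf : f =ᵐ[μ] B.indicator 1)
    (hg : Tendsto (fun n ↦ (P ^ n) f) atTop (𝓝 g)) :
    Tendsto (fun n ↦ μ (B \ φ^[n] '' B)) atTop (𝓝 0) := by
  have hf0 : 0 ≤ f := by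
    refine (Lp.coeFn_nonneg f).1 ?_
    filter_upwards [hf] with x hx
    exact hx ▸ indicator_nonneg (fun _ _ ↦ zero_le_one) x
  have hfB : Function.support f =ᵐ[μ] B := by
    filter_upwards [hf] with x hx
    have hxB : f x ≠ 0 ↔ x ∈ B := by simp [hx]
    exact propext hxB
  have hzero (n : ℕ) : ∫ x in φ^[n] ⁻¹' (φ^[n] '' B)ᶜ, f x ∂μ = 0 := by
    refine setIntegral_eq_zero_of_ae_eq_zero ?_
    filter_upwards [hf] with x hx hxn
    rw [hx, indicator_of_notMem fun hxB ↦ hxn (mem_image_of_mem _ hxB)]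
  refine (hP.tendsto_measure_inter_support hφ hf0 hg (fun n ↦ (himage n).compl) ?_).congr
    fun n ↦ ?_
  · simp only [hzero, tendsto_const_nhds]
  · rw [sdiff_eq_compl_inter]
    exact measure_congr ((ae_eq_refl _).inter hfB)

theorem tendsto_measure_iUnion_image_iterate_sdiff [IsFiniteMeasure μ]
    (hP : IsPerronFrobenius μ φ P) (hφ : MeasurePreserving φ μ μ) {A : Set Ω}
    (himage : ∀ n, NullMeasurableSet (φ^[n] '' A) μ) {f g : ℕ → Lp ℝ 1 μ}
    (hf : ∀ k, f k =ᵐ[μ] (φ^[k] '' A).indicator 1)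
    (hg : ∀ k, Tendsto (fun n ↦ (P ^ n) (f k)) atTop (𝓝 (g k))) :
    Tendsto (fun n ↦ μ ((⋃ k, φ^[k] '' A) \ φ^[n] '' A)) atTop (𝓝 0) := by
  have hadd (n k : ℕ) : φ^[n] '' (φ^[k] '' A) = φ^[n + k] '' A := by
    rw [← image_comp, ← Function.iterate_add]
  refine tendsto_measure_iUnion_sdiff_zero himage fun k ↦ (tendsto_add_atTop_iff_nat k).1 ?_
  simpa only [hadd] using hP.tendsto_measure_sdiff_image_iterate hφ
    (fun n ↦ (hadd n k).symm ▸ himage (n + k)) (hf k) (hg k)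

end IsPerronFrobenius

theorem iUnion_image_iterate_ae_eq_minimalInvariantSuperset [IsFiniteMeasure μ]
    (hφ : MeasurePreserving φ μ μ) {A : Set Ω}
    (hA : NullMeasurableSet (⋃ k, φ^[k] '' A) μ) :
    (⋃ k, φ^[k] '' A : Set Ω) =ᵐ[μ] minimalInvariantSuperset φ A := by
  have hinv : φ ⁻¹' (⋃ k, φ^[k] '' A) =ᵐ[μ] ⋃ k, φ^[k] '' A :=
    (ae_eq_of_subset_of_measure_ge (iUnion_image_iterate_subset_preimage φ A)
      (hφ.measure_preimage hA).le hA (measure_ne_top _ _)).symm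
  have hunion := Filter.EventuallyEq.countable_iUnion fun n ↦
    hφ.quasiMeasurePreserving.preimage_iterate_ae_eq n hinv
  rw [iUnion_const, ← minimalInvariantSuperset_eq_iUnion_preimage_iterate] at hunion
  exact hunion.symm

theorem measurableSet_image_iterate (hφ : ∀ s, MeasurableSet s → MeasurableSet (φ '' s))
    {A : Set Ω} (hA : MeasurableSet A) (n : ℕ) : MeasurableSet (φ^[n] '' A) := by
  rw [image_iterate_eq]
  exact Function.Iterate.rec MeasurableSet hA hφ n

theorem stmt2_general [IsFiniteMeasure μ] (hφ : MeasurePreserving φ μ μ)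
    {P : Lp ℝ 1 μ →L[ℝ] Lp ℝ 1 μ} (hP : IsPerronFrobenius μ φ P) {A : Set Ω}
    (hA : ∀ k, NullMeasurableSet (φ^[k] '' A) μ)
    (hconv : ∀ k, ∃ g : Lp ℝ 1 μ, Tendsto (fun n ↦ (P ^ n)
      (Integrable.toL1 ((φ^[k] '' A).indicator fun _ ↦ (1 : ℝ))
        ((integrable_const 1).indicator₀ (hA k)))) atTop (𝓝 g)) :
    Tendsto (fun n ↦ μ ((φ^[n] '' A) ∆ ⋃ k, φ^[k] '' A)) atTop (𝓝 0)
      ∧ μ ((⋃ k, φ^[k] '' A) ∆ minimalInvariantSuperset φ A) = 0 := by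
  choose g hg using hconv
  have hsymmDiff (n : ℕ) :
      (φ^[n] '' A) ∆ (⋃ k, φ^[k] '' A) = (⋃ k, φ^[k] '' A) \ φ^[n] '' A :=
    symmDiff_of_le (subset_iUnion (fun k ↦ φ^[k] '' A) n)
  simp only [hsymmDiff]
  exact ⟨hP.tendsto_measure_iUnion_image_iterate_sdiff hφ hA
      (fun k ↦ Integrable.coeFn_toL1 _) hg,
    measure_symmDiff_eq_zero_iff.2 <|
      iUnion_image_iterate_ae_eq_minimalInvariantSuperset hφ (.iUnion hA)⟩

end PerronFrobenius

theorem stmt2 {Ω : Type*} [m : MeasurableSpace Ω] (μ : Measure Ω) [IsProbabilityMeasure μ]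
    (φ : Ω → Ω) (hmp : MeasurePreserving φ μ μ)
    (hbi : ∀ A : Set Ω, MeasurableSet A → MeasurableSet (φ '' A))
    (P : Lp ℝ 1 μ →L[ℝ] Lp ℝ 1 μ)
    (hP : ∀ (f : Lp ℝ 1 μ) (A : Set Ω), MeasurableSet A →
      ∫ x in A, (P f) x ∂μ = ∫ x in φ ⁻¹' A, f x ∂μ)
    (hconv : ∀ f : Lp ℝ 1 μ, ∃ g : Lp ℝ 1 μ, Tendsto (fun n : ℕ => (P ^ n) f) atTop (𝓝 g))
    (A : Set Ω) (hA : MeasurableSet A) :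
    Tendsto (fun n : ℕ => μ ((φ^[n] '' A) ∆ (⋃ k : ℕ, φ^[k] '' A))) atTop (𝓝 0)
    ∧ μ ((⋃ k : ℕ, φ^[k] '' A) ∆ (⋂₀ {B : Set Ω | A ⊆ B ∧ φ ⁻¹' B = B})) = 0 := by
  exact stmt2_general hmp hP (fun k ↦ (measurableSet_image_iterate hbi hA k).nullMeasurableSet)
    fun _ ↦ hconv _
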